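/- arXiv:2107.13282 — 2 statements merged into one kernel-verified Lean document; each statement's English description precedes it below -/
import Mathlib

section
/- Let G = (V,E) be a cubic graph on n vertices with no connected component whose induced subgraph is isomorphic to K4. Let D be the set of all 4-element vertex subsets of V inducing a diamond, and let T be the set of all 3-element vertex subsets of V inducing a triangle and not contained in any member of D. Then every partition 𝒫 of V satisfies d(𝒫) ≤ (5/4)·|D| + |T| + (1/4)·(n − 3·|T| − 4·|D|). -/
open Finset

/-- The number of edges of `G` with both endpoints in `S`. -/
noncomputable def edgesIn {V : Type*} (G : SimpleGraph V) (S : Finset V) : ℕ :=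
  Set.ncard {e : Sym2 V | e ∈ G.edgeSet ∧ ∀ v ∈ e, v ∈ S}

/-- The density of the set `S` of vertices in `G`: `|E(S)|/|S|`. -/
noncomputable def density {V : Type*} (G : SimpleGraph V) (S : Finset V) : ℚ :=
  (edgesIn G S : ℚ) / (S.card : ℚ)

/-- The density of a partition: the sum of the densities of its parts. -/
noncomputable def partDensity {V : Type*} [DecidableEq V] (G : SimpleGraph V) {s : Finset V}
    (P : Finpartition s) : ℚ :=
  ∑ p ∈ P.parts, density G p

/-- `S` is the vertex set of a connected component of `G` inducing a `K₄`:
it has 4 vertices, is a clique, and is closed under adjacency. -/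
def IsK4Component {V : Type*} (G : SimpleGraph V) (S : Finset V) : Prop :=
  S.card = 4 ∧ (∀ u ∈ S, ∀ v ∈ S, u ≠ v → G.Adj u v) ∧ (∀ u ∈ S, ∀ v, G.Adj u v → v ∈ S)

/-- The diamond graph: `K₄` minus the edge `{0,1}`. -/
def diamondGraph : SimpleGraph (Fin 4) :=
  SimpleGraph.fromEdgeSet {s(0, 2), s(0, 3), s(1, 2), s(1, 3), s(2, 3)}

/-!
A part `S` without a triangle has at most `|S|²/4` edges by Turán's theorem, hence density at most
`|S|/4`. In a `K₄`-free graph of maximum degree three, any part has density at most `|S|/4 + 1/4`.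
Summing, `d(𝒫)` exceeds `n/4` by at most a quarter for each part containing a triangle. Choose a
triangle in each such part and a member of `D ∪ T` containing it: members of `D ∪ T` have at most
four vertices, so no member contains two disjoint triangles, and there are at most `|D| + |T|`
such parts.
-/

/-- The vertex sets of the induced diamonds of `G`; the set `D` of the theorem. -/
def diamonds {V : Type*} (G : SimpleGraph V) : Set (Finset V) :=
  {S | S.card = 4 ∧ Nonempty (G.induce (S : Set V) ≃g diamondGraph)}

/-- The vertex sets of the triangles of `G` that lie in no induced diamond; the set `T` of the
theorem. -/
def trianglesOutsideDiamonds {V : Type*} (G : SimpleGraph V) : Set (Finset V) :=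
  {S | S.card = 3 ∧ (∀ u ∈ S, ∀ v ∈ S, u ≠ v → G.Adj u v) ∧ ∀ S' ∈ diamonds G, ¬ S ⊆ S'}

section

variable {V : Type*} {G : SimpleGraph V} {S : Finset V}

lemma edgesIn_eq_card_edgeFinset_induce [Fintype (G.induce (S : Set V)).edgeSet] :
    edgesIn G S = #(G.induce (S : Set V)).edgeFinset := by
  have image_edgeSet_induce : {e : Sym2 V | e ∈ G.edgeSet ∧ ∀ v ∈ e, v ∈ S} =
      Sym2.map Subtype.val '' (G.induce (S : Set V)).edgeSet := by
    ext e
    induction e with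
    | _ u v =>
      constructor
      · rintro ⟨huv, hmem⟩
        exact ⟨s(⟨u, hmem u (Sym2.mem_mk_left u v)⟩, ⟨v, hmem v (Sym2.mem_mk_right u v)⟩), huv, rfl⟩
      · rintro ⟨⟨a, b⟩, hab, heq⟩
        rw [← heq]
        exact ⟨hab, by simp⟩
  rw [edgesIn, image_edgeSet_induce,
    Set.ncard_image_of_injective _ (Sym2.map.injective Subtype.val_injective),
    ← SimpleGraph.coe_edgeFinset, Set.ncard_coe_finset]

lemma two_mul_edgesIn_le_of_degree_le [G.LocallyFinite] {d : ℕ} (hdeg : ∀ v ∈ S, G.degree v ≤ d) :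
    2 * edgesIn G S ≤ d * #S := by
  classical
  have degree_induce_le (v : (S : Set V)) : (G.induce (S : Set V)).degree v ≤ d :=
    ((SimpleGraph.Copy.induce G (S : Set V)).degree_le v).trans (hdeg v v.2)
  calc 2 * edgesIn G S = ∑ v, (G.induce (S : Set V)).degree v := by
        rw [edgesIn_eq_card_edgeFinset_induce, SimpleGraph.sum_degrees_eq_twice_card_edges]
    _ ≤ #(univ : Finset (S : Set V)) • d := sum_le_card_nsmul _ _ _ fun v _ ↦ degree_induce_le v
    _ = d * #S := by simp [mul_comm]

lemma two_mul_mul_edgesIn_le_of_cliqueFreeOn {r : ℕ} (hfree : G.CliqueFreeOn S (r + 1)) :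
    2 * r * edgesIn G S ≤ (r - 1) * #S ^ 2 := by
  classical
  have turan := ((SimpleGraph.cliqueFree_induce_iff _ _ _).2 hfree).card_edgeFinset_le
  simp only [← SimpleGraph.card_edgeFinset_turanGraph, coe_sort_coe, Fintype.card_coe] at turan
  rw [edgesIn_eq_card_edgeFinset_induce]
  exact (Nat.mul_le_mul_left _ turan).trans SimpleGraph.mul_card_edgeFinset_turanGraph_le

lemma density_le_of_cliqueFreeOn_three (hfree : G.CliqueFreeOn S 3) :
    density G S ≤ #S / 4 := by
  have turan : (2 * 2 * edgesIn G S : ℚ) ≤ 1 * #S ^ 2 :=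
    mod_cast two_mul_mul_edgesIn_le_of_cliqueFreeOn hfree
  exact div_le_of_le_mul₀ (by positivity) (by positivity) (by linarith)

-- From five vertices on, the degree bound suffices; below, Turán's bound `|S|²/3` does, where at
-- four vertices it must be rounded down from `16/3` to `5`.
lemma four_mul_edgesIn_le_of_degree_le_three [G.LocallyFinite] (hdeg : ∀ v ∈ S, G.degree v ≤ 3)
    (hfree : G.CliqueFreeOn S 4) : 4 * edgesIn G S ≤ #S * (#S + 1) := by
  have degree_bound := two_mul_edgesIn_le_of_degree_le hdeg
  have turan := two_mul_mul_edgesIn_le_of_cliqueFreeOn hfree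
  obtain hlarge | hsmall := le_or_gt 5 #S
  · nlinarith
  · interval_cases #S <;> omega

lemma density_le_of_degree_le_three [G.LocallyFinite] (hdeg : ∀ v ∈ S, G.degree v ≤ 3)
    (hfree : G.CliqueFreeOn S 4) : density G S ≤ (#S + 1) / 4 := by
  have edge_bound : (4 * edgesIn G S : ℚ) ≤ #S * (#S + 1) :=
    mod_cast four_mul_edgesIn_le_of_degree_le_three hdeg hfree
  exact div_le_of_le_mul₀ (by positivity) (by positivity) (by linarith)

lemma mem_of_adj_of_isNClique_of_degree_le [G.LocallyFinite] {d : ℕ} {u v : V}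
    (hS : G.IsNClique (d + 1) S) (hu : u ∈ S) (hdeg : G.degree u ≤ d) (huv : G.Adj u v) :
    v ∈ S := by
  classical
  have erase_subset : S.erase u ⊆ G.neighborFinset u := fun w hw ↦
    (G.mem_neighborFinset u w).2 <|
      hS.isClique hu (mem_of_mem_erase hw) (ne_of_mem_erase hw).symm
  have erase_eq : S.erase u = G.neighborFinset u :=
    eq_of_subset_of_card_le erase_subset <| by
      rwa [G.card_neighborFinset_eq_degree, card_erase_of_mem hu, hS.card_eq, Nat.add_sub_cancel]
  exact mem_of_mem_erase (erase_eq ▸ (G.mem_neighborFinset u v).2 huv)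

lemma cliqueFree_four_of_not_exists_isK4Component [G.LocallyFinite]
    (hdeg : ∀ v, G.degree v ≤ 3) (hK4 : ¬ ∃ S : Finset V, IsK4Component G S) :
    G.CliqueFree 4 := fun S hS ↦
  hK4 ⟨S, hS.card_eq, fun _ hu _ hv huv ↦ hS.isClique hu hv huv,
    fun u hu _ huv ↦ mem_of_adj_of_isNClique_of_degree_le hS hu (hdeg u) huv⟩

lemma card_le_four_of_mem_diamonds_union_triangles
    (hS : S ∈ diamonds G ∪ trianglesOutsideDiamonds G) : #S ≤ 4 := by
  obtain hS | hS := hS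
  · exact hS.1.le
  · exact hS.1.le.trans (by norm_num)

lemma exists_superset_mem_diamonds_union_triangles (hS : G.IsNClique 3 S) :
    ∃ A ∈ diamonds G ∪ trianglesOutsideDiamonds G, S ⊆ A := by
  by_cases h : ∃ A ∈ diamonds G, S ⊆ A
  · obtain ⟨A, hA, hSA⟩ := h
    exact ⟨A, .inl hA, hSA⟩
  · exact ⟨S, .inr ⟨hS.card_eq, fun _ hu _ hv huv ↦ hS.isClique hu hv huv,
      fun A hA hSA ↦ h ⟨A, hA, hSA⟩⟩, Subset.rfl⟩

end

section

variable {V : Type*} [DecidableEq V] {G : SimpleGraph V} {s : Finset V}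

open scoped Classical in
/-- The parts of `P` that contain an `r`-clique of `G`. For `r = 3` these are the parts whose
density may exceed a quarter of their size. -/
noncomputable def partsWithClique (G : SimpleGraph V) (P : Finpartition s) (r : ℕ) :
    Finset (Finset V) :=
  {p ∈ P.parts | ¬ G.CliqueFreeOn p r}

lemma card_partsWithClique_le (P : Finpartition s) {r : ℕ} {F : Set (Finset V)}
    (hfin : F.Finite) (hcard : ∀ A ∈ F, #A < 2 * r)
    (hcover : ∀ K, G.IsNClique r K → ∃ A ∈ F, K ⊆ A) :
    #(partsWithClique G P r) ≤ F.ncard := by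
  classical
  have exists_clique (p : Finset V) (hp : ¬ G.CliqueFreeOn (p : Set V) r) :
      ∃ K ⊆ p, #K = r ∧ ∃ A ∈ F, K ⊆ A := by
    simp only [SimpleGraph.CliqueFreeOn, coe_subset, not_forall, not_not] at hp
    obtain ⟨K, hKp, hK⟩ := hp
    exact ⟨K, hKp, hK.card_eq, hcover K hK⟩
  choose! clique clique_subset card_clique cover cover_mem clique_subset_cover using exists_clique
  rw [← Set.ncard_coe_finset]
  refine Set.ncard_le_ncard_of_injOn cover (fun p hp ↦ cover_mem p (mem_filter.1 hp).2) ?_ hfin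
  intro p hp q hq cover_eq
  obtain ⟨hpP, hp⟩ := mem_filter.1 hp
  obtain ⟨hqP, hq⟩ := mem_filter.1 hq
  by_contra hne
  have disjoint_cliques : Disjoint (clique p) (clique q) :=
    (P.disjoint hpP hqP hne).mono (clique_subset p hp) (clique_subset q hq)
  have two_mul_le : 2 * r ≤ #(cover p) :=
    calc 2 * r = #(clique p ∪ clique q) := by
          rw [card_union_of_disjoint disjoint_cliques, card_clique p hp, card_clique q hq, two_mul]
      _ ≤ #(cover p) := card_le_card <|
          union_subset (clique_subset_cover p hp) (cover_eq ▸ clique_subset_cover q hq)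
  exact (hcard _ (cover_mem p hp)).not_ge two_mul_le

lemma partDensity_le_of_degree_le_three [G.LocallyFinite] (hdeg : ∀ v ∈ s, G.degree v ≤ 3)
    (hfree : G.CliqueFreeOn s 4) (P : Finpartition s) :
    partDensity G P ≤ #s / 4 + #(partsWithClique G P 3) / 4 := by
  classical
  have density_le (p : Finset V) (hp : p ∈ P.parts) :
      density G p ≤ #p / 4 + if ¬ G.CliqueFreeOn (p : Set V) 3 then 1 / 4 else 0 := by
    split_ifs with htri
    · simpa using density_le_of_cliqueFreeOn_three htri
    · rw [← add_div]
      exact density_le_of_degree_le_three (fun v hv ↦ hdeg v (P.le hp hv))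
        (hfree.subset _ (coe_subset.2 (P.le hp)))
  calc partDensity G P
      ≤ ∑ p ∈ P.parts, ((#p : ℚ) / 4 + if ¬ G.CliqueFreeOn (p : Set V) 3 then 1 / 4 else 0) :=
        sum_le_sum density_le
    _ = #s / 4 + #(partsWithClique G P 3) / 4 := by
        rw [sum_add_distrib, ← sum_div, ← Nat.cast_sum, P.sum_card_parts, ← sum_filter, sum_const,
          nsmul_eq_mul, mul_one_div, partsWithClique]

theorem stmt7_general [Finite V] [G.LocallyFinite] (hdeg : ∀ v ∈ s, G.degree v ≤ 3)
    (hfree : G.CliqueFreeOn s 4) (P : Finpartition s) :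
    partDensity G P ≤
      (5 / 4) * ((diamonds G).ncard : ℚ) + ((trianglesOutsideDiamonds G).ncard : ℚ) +
        (1 / 4) * ((#s : ℚ) - 3 * ((trianglesOutsideDiamonds G).ncard : ℚ) -
          4 * ((diamonds G).ncard : ℚ)) := by
  have card_triangle_parts : #(partsWithClique G P 3) ≤
      (diamonds G).ncard + (trianglesOutsideDiamonds G).ncard :=
    (card_partsWithClique_le P (Set.toFinite _)
      (fun _ hA ↦ (card_le_four_of_mem_diamonds_union_triangles hA).trans_lt (by norm_num))
      fun _ hK ↦ exists_superset_mem_diamonds_union_triangles hK).trans (Set.ncard_union_le _ _)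
  have partDensity_le := partDensity_le_of_degree_le_three hdeg hfree P
  have cast_card_triangle_parts : (#(partsWithClique G P 3) : ℚ) ≤
      (diamonds G).ncard + (trianglesOutsideDiamonds G).ncard := mod_cast card_triangle_parts
  linarith

end

theorem stmt7 {V : Type*} [Fintype V] [DecidableEq V] (G : SimpleGraph V) [DecidableRel G.Adj]
    (n : ℕ) (hn : Fintype.card V = n)
    (hcubic : ∀ v : V, G.degree v = 3)
    (hK4 : ¬ ∃ S : Finset V, IsK4Component G S)
    (D T : Set (Finset V))
    (hD : D = {S : Finset V | S.card = 4 ∧ Nonempty (G.induce (S : Set V) ≃g diamondGraph)})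
    (hT : T = {S : Finset V | S.card = 3 ∧ (∀ u ∈ S, ∀ v ∈ S, u ≠ v → G.Adj u v) ∧
      ∀ S' ∈ D, ¬ S ⊆ S'})
    (P : Finpartition (univ : Finset V)) :
    partDensity G P ≤
      (5 / 4) * (D.ncard : ℚ) + (T.ncard : ℚ) +
        (1 / 4) * ((n : ℚ) - 3 * (T.ncard : ℚ) - 4 * (D.ncard : ℚ)) := by
  subst hn hT hD
  exact stmt7_general (fun v _ ↦ (hcubic v).le)
    (cliqueFree_four_of_not_exists_isK4Component (fun v ↦ (hcubic v).le) hK4).cliqueFreeOn P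
end

section
/- Let G = (V,E) be a graph on n ≥ 2 vertices with minimum degree δ(G) ≥ n−3 that is not complete, and let H be the complement of G (so H has maximum degree at most 2, at least one edge, and is a disjoint union of paths and cycles). Let o be the number of components of H that are odd cycles, let p_o be the number of components of H that are paths on an odd number (at least 3) of vertices, let d_{n−1} be the number of isolated vertices of H (equivalently, vertices of degree n−1 in G), and set n_2 = (n + d_{n−1} + p_o + o)/2. Then every partition of V into two nonempty parts has density at most (n−2)/2 − o/n_2, and there exists a partition of V into two nonempty parts with density exactly (n−2)/2 − o/n_2. -/
open Finset

/-!
A part `S` of a partition has density `(|S| - 1) / 2 - e(S) / |S|`, where `e(S)` counts the edges of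
the complement `H` inside `S`, so one has to minimise `e(S) / |S| + e(Sᶜ) / |Sᶜ|`. Each component of
`H` is a path or a cycle. Counting degrees in a component `K` shows that an odd cycle always leaves
an edge uncut, and that `S` can contain more than `⌈|K| / 2⌉` vertices of `K` only by containing
edges as well. Conversely, the 2-colouring of a spanning tree of `K` attains both bounds, with the
only uncut edge of an odd cycle in the larger colour class. Taking the larger class of every
component gives a part with `∑ K, ⌈|K| / 2⌉ = n₂` vertices and `o` edges of `H`, whose complement
contains no edges of `H`.
-/

section EdgeCounting

variable {V : Type*} (H : SimpleGraph V)

lemma edgesIn_induce (s : Set V) (T : Finset s) :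
    edgesIn (H.induce s) T = edgesIn H (T.map (.subtype (· ∈ s))) := by
  rw [edgesIn, edgesIn,
    ← Set.ncard_image_of_injective _ (Sym2.map.injective (Subtype.val_injective (p := (· ∈ s))))]
  congr 1
  ext e
  induction e using Sym2.ind with
  | _ v w =>
    simp only [Set.mem_image, Set.mem_ofPred_eq, Sym2.exists, Sym2.map_mk, Sym2.eq_iff,
      SimpleGraph.mem_edgeSet, SimpleGraph.comap_adj, Function.Embedding.subtype_apply,
      Sym2.mem_iff, forall_eq_or_imp, forall_eq, Subtype.exists, exists_and_right, exists_and_left,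
      mem_map, exists_eq_right]
    grind [H.adj_comm]

variable [DecidableRel H.Adj]

lemma edgesIn_univ [Fintype V] : edgesIn H univ = #H.edgeFinset := by
  simp [edgesIn, ← Set.ncard_coe_finset]

lemma card_interedges_induce (s : Set V) (A B : Finset s) :
    #((H.induce s).interedges A B) =
      #(H.interedges (A.map (.subtype (· ∈ s))) (B.map (.subtype (· ∈ s)))) := by
  rw [← card_map (.prodMap (.subtype (· ∈ s)) (.subtype (· ∈ s)))]
  congr 1
  ext ⟨v, w⟩
  simp [SimpleGraph.mk_mem_interedges_iff]

lemma two_mul_edgesIn (S : Finset V) : 2 * edgesIn H S = #(H.interedges S S) := by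
  have map_univ : (univ : Finset (S : Set V)).map (.subtype (· ∈ (S : Set V))) = S := by
    ext
    simp
  calc 2 * edgesIn H S
    _ = 2 * #(H.induce (S : Set V)).edgeFinset := by rw [← edgesIn_univ, edgesIn_induce, map_univ]
    _ = #((H.induce (S : Set V)).interedges univ univ) := SimpleGraph.two_mul_card_edgeFinset _
    _ = #(H.interedges S S) := by rw [card_interedges_induce, map_univ]

variable [Fintype V]

lemma card_interedges_univ (S : Finset V) : #(H.interedges S univ) = ∑ v ∈ S, H.degree v := by
  simp_rw [SimpleGraph.interedges_def, card_filter, sum_product,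
    ← SimpleGraph.card_neighborFinset_eq_degree, SimpleGraph.neighborFinset_eq_filter, card_filter]

variable [DecidableEq V]

lemma sum_degree_eq_two_mul_edgesIn_add_card_interedges_compl (S : Finset V) :
    ∑ v ∈ S, H.degree v = 2 * edgesIn H S + #(H.interedges S Sᶜ) := by
  rw [two_mul_edgesIn, ← card_interedges_univ,
    ← card_union_of_disjoint (H.interedges_disjoint_right S disjoint_compl_right)]
  congr 1
  ext ⟨v, w⟩
  simp only [mem_union, SimpleGraph.mk_mem_interedges_iff, mem_univ, mem_compl]
  tauto

lemma card_interedges_compl_left (S : Finset V) :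
    #(H.interedges Sᶜ S) = #(H.interedges S Sᶜ) :=
  have := H.symm
  Rel.card_interedges_comm _ _

end EdgeCounting

section Density

variable {V : Type*} (G : SimpleGraph V)

lemma two_mul_edgesIn_add_compl (S : Finset V) :
    2 * edgesIn G S + 2 * edgesIn Gᶜ S + #S = #S * #S := by
  classical
  have adj : G.interedges S S = {e ∈ S.offDiag | G.Adj e.1 e.2} := by
    ext ⟨v, w⟩
    simp only [SimpleGraph.mk_mem_interedges_iff, mem_filter, mem_offDiag]
    grind [G.ne_of_adj]
  have not_adj : Gᶜ.interedges S S = {e ∈ S.offDiag | ¬ G.Adj e.1 e.2} := by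
    ext ⟨v, w⟩
    simp only [SimpleGraph.mk_mem_interedges_iff, mem_filter, mem_offDiag, SimpleGraph.compl_adj]
    tauto
  rw [two_mul_edgesIn, two_mul_edgesIn, adj, not_adj, card_filter_add_card_filter_not, offDiag_card]
  exact Nat.sub_add_cancel (Nat.le_mul_self _)

lemma density_eq {S : Finset V} (hS : S.Nonempty) :
    density G S = ((#S : ℚ) - 1) / 2 - edgesIn Gᶜ S / #S := by
  have pairs : (2 * edgesIn G S + 2 * edgesIn Gᶜ S + #S : ℚ) = #S * #S := by
    exact_mod_cast two_mul_edgesIn_add_compl G S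
  have card_ne_zero : (#S : ℚ) ≠ 0 := by exact_mod_cast hS.card_ne_zero
  rw [density]
  field_simp
  linarith

lemma density_add_density_compl [Fintype V] [DecidableEq V] {S : Finset V} (hS : S.Nonempty)
    (hSc : Sᶜ.Nonempty) :
    density G S + density G Sᶜ = ((Fintype.card V : ℚ) - 2) / 2 -
      ((edgesIn Gᶜ S : ℚ) / #S + (edgesIn Gᶜ Sᶜ : ℚ) / #Sᶜ) := by
  have card_split : (#S : ℚ) + #Sᶜ = Fintype.card V := by exact_mod_cast S.card_add_card_compl
  rw [density_eq G hS, density_eq G hSc, ← card_split]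
  ring

end Density

section ConnectedOfDegreeLeTwo

variable {V : Type*} [Fintype V]

/-- The indicator of an odd cycle among connected graphs: a connected graph is a cycle exactly when
it is 2-regular. -/
def oddCycleIndicator (H : SimpleGraph V) [DecidableRel H.Adj] : ℕ :=
  if (∀ v, H.degree v = 2) ∧ Odd (Fintype.card V) then 1 else 0

/-- How far the degrees of `H` on `S` fall short of those of a 2-regular graph. The truncated
subtraction is harmless when all degrees are at most two. -/
def degreeDeficit (H : SimpleGraph V) [DecidableRel H.Adj] (S : Finset V) : ℕ :=
  ∑ v ∈ S, (2 - H.degree v)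

variable {H : SimpleGraph V} [DecidableRel H.Adj]

lemma two_mul_card_eq_add_degreeDeficit [DecidableEq V] (hdeg : ∀ v, H.degree v ≤ 2)
    (S : Finset V) :
    2 * #S = 2 * edgesIn H S + #(H.interedges S Sᶜ) + degreeDeficit H S := by
  rw [← sum_degree_eq_two_mul_edgesIn_add_card_interedges_compl, degreeDeficit, ← sum_add_distrib,
    sum_congr rfl fun v _ ↦ Nat.add_sub_of_le (hdeg v), sum_const, smul_eq_mul, mul_comm]

lemma two_mul_card_compl_eq_add_degreeDeficit [DecidableEq V] (hdeg : ∀ v, H.degree v ≤ 2)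
    (S : Finset V) :
    2 * #Sᶜ = 2 * edgesIn H Sᶜ + #(H.interedges S Sᶜ) + degreeDeficit H Sᶜ := by
  rw [two_mul_card_eq_add_degreeDeficit hdeg, compl_compl, card_interedges_compl_left]

lemma degreeDeficit_univ_eq_two (hconn : H.Connected) (hdeg : ∀ v, H.degree v ≤ 2)
    (hreg : ¬ ∀ v, H.degree v = 2) : degreeDeficit H univ = 2 := by
  classical
  have edges_ge : Fintype.card V ≤ #H.edgeFinset + 1 := by
    simpa [SimpleGraph.edgeFinset_card] using hconn.card_vert_le_card_edgeSet_add_one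
  have pos : 0 < degreeDeficit H univ := by
    push Not at hreg
    obtain ⟨v, hv⟩ := hreg
    exact sum_pos' (fun _ _ ↦ Nat.zero_le _)
      ⟨v, mem_univ v, Nat.sub_pos_of_lt <| (hdeg v).lt_of_ne hv⟩
  have count : 2 * Fintype.card V = 2 * #H.edgeFinset + degreeDeficit H univ := by
    simpa [SimpleGraph.interedges_def, edgesIn_univ] using
      two_mul_card_eq_add_degreeDeficit hdeg univ
  omega

lemma degreeDeficit_add_compl_eq_zero_or_eq_two [DecidableEq V] (hconn : H.Connected)
    (hdeg : ∀ v, H.degree v ≤ 2) (S : Finset V) :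
    (degreeDeficit H S + degreeDeficit H Sᶜ = 0 ∧
      oddCycleIndicator H = Fintype.card V % 2) ∨
    (degreeDeficit H S + degreeDeficit H Sᶜ = 2 ∧ oddCycleIndicator H = 0) := by
  have split : degreeDeficit H S + degreeDeficit H Sᶜ = degreeDeficit H univ :=
    sum_add_sum_compl S _
  rw [split]
  by_cases hreg : ∀ v, H.degree v = 2
  · refine .inl ⟨by simp [degreeDeficit, hreg], ?_⟩
    rcases Nat.even_or_odd (Fintype.card V) with heven | hodd
    · simp [oddCycleIndicator, Nat.even_iff.1 heven, Nat.not_odd_iff_even.2 heven]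
    · simp [oddCycleIndicator, hreg, hodd, Nat.odd_iff.1 hodd]
  · exact .inr ⟨degreeDeficit_univ_eq_two hconn hdeg hreg, if_neg fun h ↦ hreg h.1⟩

lemma oddCycleIndicator_le_edgesIn_add_compl [DecidableEq V] (hconn : H.Connected)
    (hdeg : ∀ v, H.degree v ≤ 2) (S : Finset V) :
    oddCycleIndicator H ≤ edgesIn H S + edgesIn H Sᶜ := by
  have hS := two_mul_card_eq_add_degreeDeficit hdeg S
  have hSc := two_mul_card_compl_eq_add_degreeDeficit hdeg S
  have card_split := S.card_add_card_compl
  rcases degreeDeficit_add_compl_eq_zero_or_eq_two hconn hdeg S with ⟨deficit, cycle⟩ | ⟨-, path⟩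
  · have cut_even : #(H.interedges S Sᶜ) % 2 = 0 := by omega
    have edges : edgesIn H S + edgesIn H Sᶜ + #(H.interedges S Sᶜ) = Fintype.card V := by omega
    omega
  · rw [path]
    exact Nat.zero_le _

lemma card_add_oddCycleIndicator_le (hconn : H.Connected) (hdeg : ∀ v, H.degree v ≤ 2)
    (S : Finset V) :
    #S + oddCycleIndicator H ≤ (Fintype.card V + 1) / 2 + edgesIn H S := by
  classical
  have uncut := oddCycleIndicator_le_edgesIn_add_compl hconn hdeg S
  have hS := two_mul_card_eq_add_degreeDeficit hdeg S
  have hSc := two_mul_card_compl_eq_add_degreeDeficit hdeg S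
  have card_split := S.card_add_card_compl
  rcases degreeDeficit_add_compl_eq_zero_or_eq_two hconn hdeg S with
    ⟨deficit, cycle⟩ | ⟨deficit, path⟩
  · have balance : #S + edgesIn H Sᶜ = #Sᶜ + edgesIn H S := by omega
    omega
  · have balance : #S + edgesIn H Sᶜ ≤ #Sᶜ + edgesIn H S + 1 := by omega
    omega

lemma exists_card_le_card_interedges_compl_add_one [DecidableEq V] (hconn : H.Connected) :
    ∃ S : Finset V, Fintype.card V ≤ #(H.interedges S Sᶜ) + 1 := by
  classical
  obtain ⟨T, hTH, hT⟩ := hconn.exists_isTree_le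
  obtain ⟨s, t, hst⟩ := hT.isBipartite.exists_isBipartiteWith
  have bipartite : T.IsBipartiteWith s.toFinset t.toFinset := by simpa using hst
  use s.toFinset
  rw [← hT.card_edgeFinset, add_le_add_iff_right,
    ← SimpleGraph.isBipartiteWith_sum_degrees_eq_card_edges bipartite, ← card_interedges_univ]
  refine card_le_card fun e he ↦ ?_
  simp only [SimpleGraph.mem_interedges_iff, Set.mem_toFinset, mem_compl] at he ⊢
  obtain ⟨hv, -, hadj⟩ := he
  exact ⟨hv, hst.disjoint.notMem_of_mem_right (hst.mem_of_mem_adj hv hadj), hTH hadj⟩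

lemma exists_card_compl_le_and_card_le_card_interedges_compl_add_one [DecidableEq V]
    (hconn : H.Connected) :
    ∃ S : Finset V, #Sᶜ ≤ #S ∧ Fintype.card V ≤ #(H.interedges S Sᶜ) + 1 := by
  obtain ⟨S, hcut⟩ := exists_card_le_card_interedges_compl_add_one hconn
  rcases le_total #Sᶜ #S with h | h
  · exact ⟨S, h, hcut⟩
  · exact ⟨Sᶜ, by rwa [compl_compl], by rwa [compl_compl, card_interedges_compl_left]⟩

lemma exists_card_eq_half_and_edgesIn_eq [DecidableEq V] (hconn : H.Connected)
    (hdeg : ∀ v, H.degree v ≤ 2) :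
    ∃ S : Finset V, #S = (Fintype.card V + 1) / 2 ∧ edgesIn H S = oddCycleIndicator H ∧
      edgesIn H Sᶜ = 0 := by
  obtain ⟨S, larger, hcut⟩ := exists_card_compl_le_and_card_le_card_interedges_compl_add_one hconn
  have hS := two_mul_card_eq_add_degreeDeficit hdeg S
  have hSc := two_mul_card_compl_eq_add_degreeDeficit hdeg S
  have card_split := S.card_add_card_compl
  use S
  rcases degreeDeficit_add_compl_eq_zero_or_eq_two hconn hdeg S with
    ⟨deficit, cycle⟩ | ⟨deficit, path⟩
  · have uncut_le : edgesIn H S + edgesIn H Sᶜ ≤ 1 := by omega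
    have balance : #S + edgesIn H Sᶜ = #Sᶜ + edgesIn H S := by omega
    refine ⟨?_, ?_, ?_⟩ <;> omega
  · have uncut_eq : edgesIn H S + edgesIn H Sᶜ = 0 := by omega
    have balance : #S ≤ #Sᶜ + 1 := by omega
    refine ⟨?_, ?_, ?_⟩ <;> omega

end ConnectedOfDegreeLeTwo

section Components

variable {V : Type*} {H : SimpleGraph V}

lemma connected_induce_supp (K : H.ConnectedComponent) : (H.induce K.supp).Connected :=
  K.connected_toSimpleGraph

section Finite

variable [Finite V]

lemma ncard_supp_pos (K : H.ConnectedComponent) : 0 < K.supp.ncard :=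
  (Set.ncard_pos (Set.toFinite _)).2 K.nonempty_supp

lemma one_lt_ncard_supp {v w : V} {K : H.ConnectedComponent} (hv : v ∈ K.supp) (hvw : H.Adj v w) :
    1 < K.supp.ncard :=
  (Set.one_lt_ncard).2 ⟨v, hv, w, K.mem_supp_of_adj_mem_supp hv hvw, hvw.ne⟩

end Finite

variable [Fintype V] [DecidableRel H.Adj] [DecidableEq V]

lemma degree_induce_supp (K : H.ConnectedComponent) (v : K.supp) :
    (H.induce K.supp).degree v = H.degree v :=
  SimpleGraph.degree_induce_of_neighborSet_subset fun _ hw ↦ K.mem_supp_of_adj_mem_supp v.2 hw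

lemma degree_induce_supp_le {d : ℕ} (hdeg : ∀ v, H.degree v ≤ d) (K : H.ConnectedComponent)
    (v : K.supp) : (H.induce K.supp).degree v ≤ d :=
  (degree_induce_supp K v).trans_le (hdeg v)

lemma card_supp_eq_ncard (K : H.ConnectedComponent) : Fintype.card K.supp = K.supp.ncard := by
  rw [← Nat.card_eq_fintype_card, Nat.card_coe_set_eq]

lemma exists_forall_subtype_supp_eq (T : ∀ K : H.ConnectedComponent, Finset K.supp) :
    ∃ S : Finset V, ∀ K : H.ConnectedComponent, S.subtype (· ∈ K.supp) = T K := by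
  refine ⟨univ.filter fun v ↦ ⟨v, rfl⟩ ∈ T (H.connectedComponentMk v), fun K ↦ ?_⟩
  ext ⟨v, rfl⟩
  simp

variable (H)

lemma card_eq_sum_card_subtype_supp (S : Finset V) :
    #S = ∑ K : H.ConnectedComponent, #(S.subtype (· ∈ K.supp)) := by
  classical
  rw [card_eq_sum_card_fiberwise (f := H.connectedComponentMk) (t := univ) (by simp)]
  simp [card_subtype]

lemma sum_ncard_supp : ∑ K : H.ConnectedComponent, K.supp.ncard = Fintype.card V := by
  rw [← card_univ, card_eq_sum_card_subtype_supp H]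
  simp [← card_supp_eq_ncard]

lemma edgesIn_eq_sum_edgesIn_induce_supp (S : Finset V) :
    edgesIn H S = ∑ K : H.ConnectedComponent,
      edgesIn (H.induce K.supp) (S.subtype (· ∈ K.supp)) := by
  classical
  refine Nat.mul_left_cancel two_pos ?_
  rw [mul_sum, two_mul_edgesIn, card_eq_sum_card_fiberwise
    (f := fun e ↦ H.connectedComponentMk e.1) (t := univ) (by simp)]
  refine sum_congr rfl fun K _ ↦ ?_
  rw [edgesIn_induce, subtype_map, two_mul_edgesIn]
  congr 1
  ext ⟨v, w⟩
  simp only [mem_filter, SimpleGraph.mk_mem_interedges_iff,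
    ← SimpleGraph.ConnectedComponent.mem_supp_iff]
  grind [K.mem_supp_of_adj_mem_supp]

lemma subtype_compl_supp (S : Finset V) (K : H.ConnectedComponent) :
    Sᶜ.subtype (· ∈ K.supp) = (S.subtype (· ∈ K.supp))ᶜ := by
  ext
  simp

/-- The number of odd cycles among the components of `H`, the `o` of the theorem. -/
noncomputable def oddCycleCount : ℕ :=
  Set.ncard {K : H.ConnectedComponent | (∀ v ∈ K.supp, H.degree v = 2) ∧ Odd K.supp.ncard}

/-- The number of paths on an odd number of at least three vertices among the components of `H`, the
`p_o` of the theorem: a connected graph with degrees at most two and at least three vertices is a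
path exactly when it has a vertex of degree one. -/
noncomputable def oddPathCount : ℕ :=
  Set.ncard {K : H.ConnectedComponent |
    Odd K.supp.ncard ∧ 3 ≤ K.supp.ncard ∧ ∃ v ∈ K.supp, H.degree v = 1}

/-- The sum of `⌈|K| / 2⌉` over the components `K` of `H`; this is the `n₂` of the theorem, see
`two_mul_largePartSize` and `ncard_oddComponents`. -/
noncomputable def largePartSize : ℕ :=
  ∑ K : H.ConnectedComponent, (K.supp.ncard + 1) / 2

lemma oddCycleCount_eq_sum :
    oddCycleCount H = ∑ K : H.ConnectedComponent, oddCycleIndicator (H.induce K.supp) := by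
  classical
  simp only [oddCycleCount, oddCycleIndicator, degree_induce_supp, card_supp_eq_ncard,
    ← card_filter, ← Set.ncard_coe_finset, coe_filter_univ, Subtype.forall]

lemma two_mul_largePartSize :
    2 * largePartSize H = Fintype.card V + H.oddComponents.ncard := by
  classical
  have odd_count : H.oddComponents.ncard = ∑ K : H.ConnectedComponent, K.supp.ncard % 2 := by
    simp_rw [SimpleGraph.oddComponents, Set.ncard_eq_toFinset_card', Set.toFinset_ofPred,
      card_filter]
    refine sum_congr rfl fun K _ ↦ ?_
    split_ifs with hodd
    · exact (Nat.odd_iff.1 hodd).symm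
    · exact (Nat.not_odd_iff.1 hodd).symm
  rw [odd_count, ← sum_ncard_supp H, ← sum_add_distrib, largePartSize, mul_sum]
  exact sum_congr rfl fun K _ ↦ by omega

variable {H}

lemma largePartSize_pos [Nonempty V] : 0 < largePartSize H := by
  have := two_mul_largePartSize H
  have := Fintype.card_pos (α := V)
  omega

lemma largePartSize_lt_card (hH : H ≠ ⊥) : largePartSize H < Fintype.card V := by
  obtain ⟨v, w, hvw⟩ := SimpleGraph.ne_bot_iff_exists_adj.1 hH
  rw [← sum_ncard_supp H]
  refine sum_lt_sum (fun K _ ↦ ?_) ⟨H.connectedComponentMk v, mem_univ _, ?_⟩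
  · have := ncard_supp_pos K
    omega
  · have : 1 < (H.connectedComponentMk v).supp.ncard := one_lt_ncard_supp rfl hvw
    omega

lemma oddCycleCount_le_largePartSize : oddCycleCount H ≤ largePartSize H := by
  rw [oddCycleCount_eq_sum]
  refine sum_le_sum fun K _ ↦ ?_
  have := ncard_supp_pos K
  unfold oddCycleIndicator
  split_ifs <;> omega

lemma oddCycleCount_le_edgesIn_add_compl (hdeg : ∀ v, H.degree v ≤ 2) (S : Finset V) :
    oddCycleCount H ≤ edgesIn H S + edgesIn H Sᶜ := by
  rw [oddCycleCount_eq_sum, edgesIn_eq_sum_edgesIn_induce_supp H S,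
    edgesIn_eq_sum_edgesIn_induce_supp H Sᶜ, ← sum_add_distrib]
  refine sum_le_sum fun K _ ↦ ?_
  rw [subtype_compl_supp]
  exact oddCycleIndicator_le_edgesIn_add_compl (connected_induce_supp K)
    (degree_induce_supp_le hdeg K) _

lemma card_add_oddCycleCount_le (hdeg : ∀ v, H.degree v ≤ 2) (S : Finset V) :
    #S + oddCycleCount H ≤ largePartSize H + edgesIn H S := by
  rw [oddCycleCount_eq_sum, edgesIn_eq_sum_edgesIn_induce_supp H S,
    card_eq_sum_card_subtype_supp H S, largePartSize, ← sum_add_distrib, ← sum_add_distrib]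
  refine sum_le_sum fun K _ ↦ ?_
  rw [← card_supp_eq_ncard]
  exact card_add_oddCycleIndicator_le (connected_induce_supp K)
    (degree_induce_supp_le hdeg K) _

lemma exists_card_eq_largePartSize_and_edgesIn_eq (hdeg : ∀ v, H.degree v ≤ 2) :
    ∃ S : Finset V, #S = largePartSize H ∧ edgesIn H S = oddCycleCount H ∧ edgesIn H Sᶜ = 0 := by
  have local_part (K : H.ConnectedComponent) :=
    exists_card_eq_half_and_edgesIn_eq (connected_induce_supp K)
      (degree_induce_supp_le hdeg K)
  choose T hcard hT hTc using local_part
  obtain ⟨S, hS⟩ := exists_forall_subtype_supp_eq T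
  refine ⟨S, ?_, ?_, ?_⟩
  · rw [card_eq_sum_card_subtype_supp H, largePartSize]
    exact sum_congr rfl fun K _ ↦ by rw [hS, hcard, card_supp_eq_ncard]
  · rw [edgesIn_eq_sum_edgesIn_induce_supp, oddCycleCount_eq_sum]
    exact sum_congr rfl fun K _ ↦ by rw [hS, hT]
  · rw [edgesIn_eq_sum_edgesIn_induce_supp]
    exact sum_eq_zero fun K _ ↦ by rw [subtype_compl_supp, hS, hTc]

end Components

section OddComponents

variable {V : Type*} [Fintype V] {H : SimpleGraph V} [DecidableRel H.Adj]

lemma supp_connectedComponentMk_eq_singleton {v : V} (hv : H.degree v = 0) :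
    (H.connectedComponentMk v).supp = {v} := by
  refine Set.eq_singleton_iff_unique_mem.2 ⟨rfl, fun w hw ↦ by_contra fun hne ↦ ?_⟩
  have hreach : H.Reachable w v := SimpleGraph.ConnectedComponent.exact hw
  exact (hreach.degree_pos_right hne).ne' hv

lemma ncard_image_connectedComponentMk_isolated :
    (H.connectedComponentMk '' {v | H.degree v = 0}).ncard = {v | H.degree v = 0}.ncard := by
  refine Set.InjOn.ncard_image fun v hv w _ hvw ↦ ?_
  have hw : w ∈ (H.connectedComponentMk v).supp := hvw.symm
  rw [supp_connectedComponentMk_eq_singleton hv] at hw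
  exact hw.symm

lemma oddComponents_eq_union (hdeg : ∀ v, H.degree v ≤ 2) :
    H.oddComponents = H.connectedComponentMk '' {v | H.degree v = 0} ∪
      {K | Odd K.supp.ncard ∧ 3 ≤ K.supp.ncard ∧ ∃ v ∈ K.supp, H.degree v = 1} ∪
      {K | (∀ v ∈ K.supp, H.degree v = 2) ∧ Odd K.supp.ncard} := by
  refine Set.Subset.antisymm (fun K (hodd : Odd K.supp.ncard) ↦ ?_) ?_
  · by_cases hreg : ∀ v ∈ K.supp, H.degree v = 2
    · exact .inr ⟨hreg, hodd⟩
    push Not at hreg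
    obtain ⟨v, hv, hne⟩ := hreg
    have hle := hdeg v
    obtain hzero | hone : H.degree v = 0 ∨ H.degree v = 1 := by omega
    · exact .inl (.inl ⟨v, hzero, hv⟩)
    · obtain ⟨w, hvw⟩ := (H.degree_pos_iff_exists_adj v).1 (hone ▸ one_pos)
      have := one_lt_ncard_supp hv hvw
      exact .inl (.inr ⟨hodd, by grind, v, hv, hone⟩)
  · rintro K ((⟨v, hv, rfl⟩ | ⟨hodd, -, -⟩) | ⟨-, hodd⟩)
    · simp [SimpleGraph.oddComponents, supp_connectedComponentMk_eq_singleton hv]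
    · exact hodd
    · exact hodd

lemma ncard_oddComponents (hdeg : ∀ v, H.degree v ≤ 2) :
    H.oddComponents.ncard =
      {v | H.degree v = 0}.ncard + oddPathCount H + oddCycleCount H := by
  rw [oddComponents_eq_union hdeg, Set.ncard_union_eq, Set.ncard_union_eq,
    ncard_image_connectedComponentMk_isolated, oddPathCount, oddCycleCount]
  · refine Set.disjoint_left.2 ?_
    rintro _ ⟨v, hv, rfl⟩ ⟨-, hcard, -⟩
    simp [supp_connectedComponentMk_eq_singleton hv] at hcard
  · refine Set.disjoint_left.2 ?_
    rintro K (⟨v, hv, rfl⟩ | ⟨-, -, v, hv, hone⟩) ⟨hreg, -⟩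
    · simpa [hv.out] using hreg v rfl
    · simpa [hone] using hreg v hv

end OddComponents

section OptimalPartition

section OrderedField

variable {𝕜 : Type*} [Field 𝕜] [LinearOrder 𝕜] [IsStrictOrderedRing 𝕜] {a b e f m o : 𝕜}

lemma min_div_le_div (ha : 0 < a) (he : 0 ≤ e) (hm : 0 < m) (ho : 0 ≤ o) (hom : o ≤ m)
    (ham : a + o ≤ m + e) : min e o / m ≤ e / a := by
  rw [div_le_div_iff₀ hm ha]
  rcases le_total e o with heo | hoe
  · rw [min_eq_left heo]
    exact mul_le_mul_of_nonneg_left (by linarith) he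
  · rw [min_eq_right hoe]
    calc o * a
      _ ≤ o * (m + e - o) := mul_le_mul_of_nonneg_left (by linarith) ho
      _ = e * m - (e - o) * (m - o) := by ring
      _ ≤ e * m := sub_le_self _ (mul_nonneg (sub_nonneg.2 hoe) (sub_nonneg.2 hom))

lemma div_le_div_add_div (ha : 0 < a) (hb : 0 < b) (he : 0 ≤ e) (hf : 0 ≤ f) (hm : 0 < m)
    (ho : 0 ≤ o) (hom : o ≤ m) (ham : a + o ≤ m + e) (hbm : b + o ≤ m + f) (hoef : o ≤ e + f) :
    o / m ≤ e / a + f / b := calc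
  o / m ≤ (min e o + min f o) / m := by
    gcongr
    grind
  _ = min e o / m + min f o / m := add_div _ _ _
  _ ≤ e / a + f / b :=
    add_le_add (min_div_le_div ha he hm ho hom ham) (min_div_le_div hb hf hm ho hom hbm)

end OrderedField

variable {V : Type*} [Fintype V] [DecidableEq V] {G : SimpleGraph V} [DecidableRel G.Adj]

lemma density_add_density_compl_le (hdeg : ∀ v, Gᶜ.degree v ≤ 2) {S : Finset V} (hS : S.Nonempty)
    (hSc : Sᶜ.Nonempty) :
    density G S + density G Sᶜ ≤
      ((Fintype.card V : ℚ) - 2) / 2 - (oddCycleCount Gᶜ : ℚ) / largePartSize Gᶜ := by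
  rw [density_add_density_compl G hS hSc]
  have card_pos : (0 : ℚ) < #S := mod_cast hS.card_pos
  have card_compl_pos : (0 : ℚ) < #Sᶜ := mod_cast hSc.card_pos
  have := hS.to_type
  have size_pos : (0 : ℚ) < largePartSize Gᶜ := mod_cast largePartSize_pos
  have count_le : (oddCycleCount Gᶜ : ℚ) ≤ largePartSize Gᶜ :=
    mod_cast oddCycleCount_le_largePartSize
  refine sub_le_sub_left (div_le_div_add_div card_pos card_compl_pos (Nat.cast_nonneg _)
    (Nat.cast_nonneg _) size_pos (Nat.cast_nonneg _) count_le ?_ ?_ ?_) _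
  · exact_mod_cast card_add_oddCycleCount_le hdeg S
  · exact_mod_cast card_add_oddCycleCount_le hdeg Sᶜ
  · exact_mod_cast oddCycleCount_le_edgesIn_add_compl hdeg S

lemma exists_density_add_density_compl_eq (hdeg : ∀ v, Gᶜ.degree v ≤ 2) (hG : G ≠ ⊤) :
    ∃ S : Finset V, S.Nonempty ∧ Sᶜ.Nonempty ∧ density G S + density G Sᶜ =
      ((Fintype.card V : ℚ) - 2) / 2 - (oddCycleCount Gᶜ : ℚ) / largePartSize Gᶜ := by
  obtain ⟨S, hcard, hedges, hedges_compl⟩ := exists_card_eq_largePartSize_and_edgesIn_eq hdeg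
  have lt_card : #S < Fintype.card V := hcard ▸ largePartSize_lt_card (compl_eq_bot.not.2 hG)
  have card_split := S.card_add_card_compl
  have : Nonempty V := Fintype.card_pos_iff.1 (by omega)
  have hS : S.Nonempty := card_pos.1 (hcard ▸ largePartSize_pos)
  have hSc : Sᶜ.Nonempty := card_pos.1 (by omega)
  refine ⟨S, hS, hSc, ?_⟩
  rw [density_add_density_compl G hS hSc, hcard, hedges, hedges_compl, Nat.cast_zero, zero_div,
    add_zero]

end OptimalPartition

theorem stmt14 {V : Type*} [Fintype V] [DecidableEq V] (G : SimpleGraph V) [DecidableRel G.Adj]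
    (n : ℕ) (hn : Fintype.card V = n) (hn2 : 2 ≤ n)
    (hδ : ∀ v : V, n ≤ G.degree v + 3)
    (hnotcomplete : G ≠ ⊤)
    (o po dn1 : ℕ)
    (ho : o = Set.ncard {K : Gᶜ.ConnectedComponent |
      (∀ v ∈ K.supp, Gᶜ.degree v = 2) ∧ Odd K.supp.ncard})
    (hpo : po = Set.ncard {K : Gᶜ.ConnectedComponent |
      Odd K.supp.ncard ∧ 3 ≤ K.supp.ncard ∧ ∃ v ∈ K.supp, Gᶜ.degree v = 1})
    (hd : dn1 = Set.ncard {v : V | Gᶜ.degree v = 0}) :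
    (∀ V₁ V₂ : Finset V, V₁.Nonempty → V₂.Nonempty → Disjoint V₁ V₂ → V₁ ∪ V₂ = univ →
      density G V₁ + density G V₂ ≤
        ((n : ℚ) - 2) / 2 - (o : ℚ) / (((n : ℚ) + (dn1 : ℚ) + (po : ℚ) + (o : ℚ)) / 2)) ∧
    (∃ V₁ V₂ : Finset V, V₁.Nonempty ∧ V₂.Nonempty ∧ Disjoint V₁ V₂ ∧ V₁ ∪ V₂ = univ ∧
      density G V₁ + density G V₂ =
        ((n : ℚ) - 2) / 2 - (o : ℚ) / (((n : ℚ) + (dn1 : ℚ) + (po : ℚ) + (o : ℚ)) / 2)) := by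
  subst hn ho hpo hd
  have hdeg (v : V) : Gᶜ.degree v ≤ 2 := by
    have := hδ v
    have := G.degree_compl v
    omega
  have n₂_eq : ((Fintype.card V : ℚ) + {v | Gᶜ.degree v = 0}.ncard + oddPathCount Gᶜ +
      oddCycleCount Gᶜ) / 2 = largePartSize Gᶜ := by
    rw [div_eq_iff two_ne_zero, mul_comm]
    norm_cast
    rw [two_mul_largePartSize, ncard_oddComponents hdeg]
    ring
  rw [← oddPathCount, ← oddCycleCount, n₂_eq]
  constructor
  · intro V₁ V₂ h₁ h₂ hdisj hunion
    obtain rfl : V₁ᶜ = V₂ := IsCompl.compl_eq ⟨hdisj, codisjoint_iff.2 hunion⟩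
    exact density_add_density_compl_le hdeg h₁ h₂
  · obtain ⟨S, hS, hSc, heq⟩ := exists_density_add_density_compl_eq hdeg hnotcomplete
    exact ⟨S, Sᶜ, hS, hSc, disjoint_compl_right, union_compl S, heq⟩
end
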